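/- (Replacement of the small-scale density by the mesoscopic density, final step in the proof of Theorem 3.1) For every jump rate c and every constant C > 0, lim_{i→∞} limsup_{ε→0} limsup_{m→∞} sup_{μ ∈ P_{m,C}} E_μ | η̄_{o,i} − η̄_{o, b(ε√t_m)} | = 0. -/

import Mathlib

open Filter Pointwise

namespace Tower

variable {Γ : Type} [Group Γ] [DecidableEq Γ]

/-- The ball of radius `n` about the identity in the Cayley graph of `(Γ, S)`, as a `Finset`:
products of at most `n` elements of `S`. -/
def ballF (S : Finset Γ) : ℕ → Finset Γ
  | 0 => {1}
  | n + 1 => ballF S n ∪ ballF S n * S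

lemma one_mem_ballF (S : Finset Γ) (n : ℕ) : (1 : Γ) ∈ ballF S n := by
  induction n with
  | zero => simp [ballF]
  | succ n ih => exact Finset.mem_union_left _ ih

/-- The word norm of `x` with respect to `S`. -/
noncomputable def wordNorm (S : Finset Γ) (x : Γ) : ℕ := sInf {n | x ∈ ballF S n}

/-- `(F i)` is a Følner sequence for `(Γ, S)`. -/
def IsFolner (S : Finset Γ) (F : ℕ → Finset Γ) : Prop :=
  (∀ i, (F i).Nonempty) ∧
    Tendsto (fun i => (((F i * S) \ F i).card : ℝ) / (F i).card) atTop (nhds 0)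

/-- `b(K)`: the largest `i` such that `F i` is contained in the ball of radius `K` about `o`. -/
noncomputable def bFol (S : Finset Γ) (F : ℕ → Finset Γ) (K : ℝ) : ℕ :=
  sSup {i | ∀ x ∈ F i, (wordNorm S x : ℝ) ≤ K}

/-- Exchange the values of a configuration at two coordinates. -/
def exch {α : Type} [DecidableEq α] (x y : α) (η : α → Bool) : α → Bool :=
  fun z => if z = x then η y else if z = y then η x else η z

/-- Exchange of values at two coordinates, on configurations restricted to a `Finset`. -/
def exchOn {α : Type} [DecidableEq α] (A : Finset α) (x y : α)
    (ζ : {a // a ∈ A} → Bool) : {a // a ∈ A} → Bool :=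
  fun z => if (z : α) = x then (if h : y ∈ A then ζ ⟨y, h⟩ else ζ z)
    else if (z : α) = y then (if h : x ∈ A then ζ ⟨x, h⟩ else ζ z) else ζ z

/-- The type of generators. -/
abbrev Gen (S : Finset Γ) : Type _ := {s : Γ // s ∈ S}

/-- A `Γ`-invariant local function bundle for vertices `f : V × Z → ℝ` on the Cayley graph
`X = (V, E)` of `(Γ, S)`, `V = Γ`, `Z = {0,1}^V`. -/
structure LocalBundleV (S : Finset Γ) : Type _ where
  f : Γ → (Γ → Bool) → ℝ
  r : ℕ
  localized : ∀ (x : Γ) (η η' : Γ → Bool),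
    (∀ z ∈ (ballF S r).image (x * ·), η z = η' z) → f x η = f x η'
  invariant : ∀ (σ x : Γ) (η : Γ → Bool), f (σ * x) (fun z => η (σ⁻¹ * z)) = f x η

/-- A jump rate: a symmetric, non-degenerate `Γ`-invariant local function bundle for edges,
an edge being encoded as a pair `(x, s) : Γ × Gen S` with origin `x` and terminus `x * s`. -/
structure JumpRate (S : Finset Γ) : Type _ where
  c : Γ → Gen S → (Γ → Bool) → ℝ
  c₀ : ℝ
  c₀_pos : 0 < c₀
  nondeg : ∀ x s η, c₀ ≤ c x s η
  r : ℕ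
  localized : ∀ (x : Γ) (s : Gen S) (η η' : Γ → Bool),
    (∀ z ∈ (ballF S r).image (x * ·) ∪ (ballF S r).image (x * (s : Γ) * ·), η z = η' z) →
      c x s η = c x s η'
  invariant : ∀ (σ x : Γ) (s : Gen S) (η : Γ → Bool),
    c (σ * x) s (fun z => η (σ⁻¹ * z)) = c x s η
  symm_rev : ∀ (x : Γ) (s : Gen S) (h : (s : Γ)⁻¹ ∈ S) (η : Γ → Bool),
    c (x * (s : Γ)) ⟨(s : Γ)⁻¹, h⟩ η = c x s η
  symm_exch : ∀ (x : Γ) (s : Gen S) (η : Γ → Bool),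
    c x s (exch x (x * (s : Γ)) η) = c x s η

/-- `ρ`-Bernoulli weight on `{0,1}`. -/
def bw (ρ : ℝ) (b : Bool) : ℝ := if b then ρ else 1 - ρ

/-- Expectation with respect to the `ρ`-Bernoulli product measure `ν_ρ` of a cylinder function
depending only on the coordinates in the finite set `A`. -/
noncomputable def expCyl (ρ : ℝ) (A : Finset Γ) (g : (Γ → Bool) → ℝ) : ℝ :=
  ∑ ζ : ({a // a ∈ A} → Bool),
    (∏ a : {a // a ∈ A}, bw ρ (ζ a)) *
      g (fun z => if h : z ∈ A then ζ ⟨z, h⟩ else false)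

/-- The global average `⟨f_o⟩(ρ) = E_{ν_ρ}[f_o]`. -/
noncomputable def globalAvg {S : Finset Γ} (f : LocalBundleV S) (ρ : ℝ) : ℝ :=
  expCyl ρ (ballF S f.r) (f.f 1)

section Quot

variable (N : Subgroup Γ)

/-- The configuration space `Z_m = {0,1}^{V_m}` over the quotient graph `X_m = Γ_m \ X`. -/
abbrev Conf (N : Subgroup Γ) : Type _ := (Γ ⧸ N) → Bool

/-- The `Γ_m`-periodic extension of a configuration on `X_m` to `X`. -/
def liftZ (η : Conf N) : Γ → Bool := fun x => η (QuotientGroup.mk x)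

/-- The function on `V_m × Z_m` induced by a local function bundle. -/
noncomputable def fQ {S : Finset Γ} (f : LocalBundleV S) (v : Γ ⧸ N) (η : Conf N) : ℝ :=
  f.f (Quotient.out v) (liftZ N η)

/-- The jump rate induced on the quotient graph, on the edge `(v, v * s)`. -/
noncomputable def cQ {S : Finset Γ} (c : JumpRate S) (v : Γ ⧸ N) (s : Gen S) (η : Conf N) : ℝ :=
  c.c (Quotient.out v) s (liftZ N η)

variable [N.Normal]

/-- `η^e` on the quotient, for the edge `e = (v, v * s)`. -/
def exchQ [DecidableEq (Γ ⧸ N)] (v : Γ ⧸ N) (s : Γ) (η : Conf N) : Conf N :=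
  exch v (v * QuotientGroup.mk s) η

/-- The graph distance on the quotient graph `X_m`. -/
noncomputable def distQ (S : Finset Γ) (v w : Γ ⧸ N) : ℕ :=
  sInf {n | ∃ x ∈ ballF S n, v * QuotientGroup.mk x = w}

/-- The diameter of the quotient graph `X_m`. -/
noncomputable def diamQ (S : Finset Γ) : ℕ :=
  sSup {k | ∃ v w : Γ ⧸ N, distQ N S v w = k}

variable [Fintype (Γ ⧸ N)] [DecidableEq (Γ ⧸ N)]

/-- `μ` is a probability measure on the finite configuration space `Z_m`. -/
def IsProb (μ : Conf N → ℝ) : Prop := (∀ η, 0 ≤ μ η) ∧ ∑ η, μ η = 1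

/-- The action of `Γ/Γ_m` on `Z_m`. -/
def actQ (σ : Γ ⧸ N) (η : Conf N) : Conf N := fun z => η (σ⁻¹ * z)

/-- `μ` is `Γ/Γ_m`-invariant. -/
def IsInvariant (μ : Conf N → ℝ) : Prop := ∀ σ η, μ (actQ N σ η) = μ η

/-- The uniform ((1/2)-Bernoulli) measure `ν_m` on `Z_m`. -/
noncomputable def nuU : Conf N → ℝ := fun _ => (Fintype.card (Conf N) : ℝ)⁻¹

/-- The density `φ = dμ/dν_m`. -/
noncomputable def dens (μ : Conf N → ℝ) : Conf N → ℝ :=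
  fun η => (Fintype.card (Conf N) : ℝ) * μ η

/-- `√φ` where `φ = dμ/dν_m`. -/
noncomputable def sqrtDens (μ : Conf N → ℝ) : Conf N → ℝ :=
  fun η => Real.sqrt (dens N μ η)

/-- Expectation with respect to a probability measure on `Z_m`. -/
noncomputable def Emeas (μ : Conf N → ℝ) (g : Conf N → ℝ) : ℝ := ∑ η, μ η * g η

/-- The generator `L_m F (η) = Σ_{e ∈ E_m} c(e,η) (F(η^e) - F(η))`. -/
noncomputable def Lgen {S : Finset Γ} (c : JumpRate S) (F : Conf N → ℝ) (η : Conf N) : ℝ :=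
  ∑ e : (Γ ⧸ N) × Gen S, cQ N c e.1 e.2 η * (F (exchQ N e.1 (e.2 : Γ) η) - F η)

/-- The Dirichlet form `I_m(μ) = -∫ √φ L_m √φ dν_m`. -/
noncomputable def ImGen {S : Finset Γ} (c : JumpRate S) (μ : Conf N → ℝ) : ℝ :=
  - ∑ η, nuU N η * (sqrtDens N μ η * Lgen N c (sqrtDens N μ) η)

/-- The Dirichlet form in sum form:
`I_m(μ) = (1/2) Σ_{e ∈ E_m} ∫ c(e,η) (π_e √φ)² dν_m`. -/
noncomputable def ImSum {S : Finset Γ} (c : JumpRate S) (μ : Conf N → ℝ) : ℝ :=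
  (1 / 2) * ∑ e : (Γ ⧸ N) × Gen S, ∑ η, nuU N η *
    (cQ N c e.1 e.2 η * (sqrtDens N μ (exchQ N e.1 (e.2 : Γ) η) - sqrtDens N μ η) ^ 2)

/-- The local average `f̄_{v,i}` on the quotient, over the Følner set `Fi`. -/
noncomputable def fbarQ {S : Finset Γ} (f : LocalBundleV S) (Fi : Finset Γ) (v : Γ ⧸ N)
    (η : Conf N) : ℝ :=
  ((Fi.card : ℝ))⁻¹ * ∑ σ ∈ Fi, fQ N f (QuotientGroup.mk σ * v) η

/-- The local particle density `η̄_{v,i}` on the quotient, over the Følner set `Fi`. -/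
noncomputable def etabarQ (Fi : Finset Γ) (v : Γ ⧸ N) (η : Conf N) : ℝ :=
  ((Fi.card : ℝ))⁻¹ * ∑ σ ∈ Fi, (if η (QuotientGroup.mk σ * v) then (1 : ℝ) else 0)

/-- The image of `E⁰ = {e ∈ E : oe = o or te = o}` in `E_m`. -/
def E0Q (S : Finset Γ) : Finset ((Γ ⧸ N) × Gen S) :=
  Finset.univ.filter fun e => e.1 = 1 ∨ e.1 * QuotientGroup.mk (e.2 : Γ) = 1

/-- The marginal `μ|_Λ` on `Z_Λ = {0,1}^A` of a measure on `Z_m` (identified with its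
`Γ_m`-periodic extension). -/
noncomputable def marg (A : Finset Γ) (μ : Conf N → ℝ) (ζ : {a // a ∈ A} → Bool) : ℝ :=
  ∑ η : Conf N, if (∀ a : {a // a ∈ A}, liftZ N η (a : Γ) = ζ a) then μ η else 0

/-- The density `φ_Λ = d(μ|_Λ)/dν_Λ`. -/
noncomputable def margDens (A : Finset Γ) (μ : Conf N → ℝ) (ζ : {a // a ∈ A} → Bool) : ℝ :=
  (Fintype.card ({a // a ∈ A} → Bool) : ℝ) * marg N A μ ζ

/-- The restricted Dirichlet form
`I°_Λ(μ) = (1/2) Σ_{e ∈ E_Λ} ∫_{Z_Λ} (π_e √φ_Λ)² dν_Λ` for the subgraph `Λ = (A, Eset)`. -/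
noncomputable def IrestV {S : Finset Γ} (A : Finset Γ) (Eset : Finset (Γ × Gen S))
    (μ : Conf N → ℝ) : ℝ :=
  (1 / 2) * ∑ e ∈ Eset, ∑ ζ : ({a // a ∈ A} → Bool),
    (Fintype.card ({a // a ∈ A} → Bool) : ℝ)⁻¹ *
      (Real.sqrt (margDens N A μ (exchOn A e.1 (e.1 * (e.2 : Γ)) ζ)) -
        Real.sqrt (margDens N A μ ζ)) ^ 2

/-- The marginal on `Z_Λ × Z_Λ` of the pushforward `σ̂μ` of `μ` under `η ↦ (η, σ⁻¹η)`. -/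
noncomputable def margTwo (σ : Γ) (A : Finset Γ) (μ : Conf N → ℝ)
    (ζ ζ' : {a // a ∈ A} → Bool) : ℝ :=
  ∑ η : Conf N,
    if ((∀ a : {a // a ∈ A}, liftZ N η (a : Γ) = ζ a) ∧
        (∀ a : {a // a ∈ A}, liftZ N η (σ * (a : Γ)) = ζ' a)) then μ η else 0

/-- The density of `(σ̂μ)|_{Λ×Λ}` with respect to `ν_Λ ⊗ ν_Λ`. -/
noncomputable def margTwoDens (σ : Γ) (A : Finset Γ) (μ : Conf N → ℝ)
    (ζ ζ' : {a // a ∈ A} → Bool) : ℝ :=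
  ((Fintype.card ({a // a ∈ A} → Bool) : ℝ)) ^ 2 * margTwo N σ A μ ζ ζ'

/-- `I^{(o,o)}_{Λ×Λ}(σ̂μ) = (1/2) ∫ (π̃_{o,o} √(d(σ̂μ)|_{Λ×Λ}/d(ν_Λ⊗ν_Λ)))² d(ν_Λ⊗ν_Λ)`. -/
noncomputable def Ioo (σ : Γ) (A : Finset Γ) (h1 : (1 : Γ) ∈ A) (μ : Conf N → ℝ) : ℝ :=
  (1 / 2) * ∑ ζ : ({a // a ∈ A} → Bool), ∑ ζ' : ({a // a ∈ A} → Bool),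
    (((Fintype.card ({a // a ∈ A} → Bool) : ℝ)) ^ 2)⁻¹ *
      (Real.sqrt (margTwoDens N σ A μ (Function.update ζ ⟨1, h1⟩ (ζ' ⟨1, h1⟩))
          (Function.update ζ' ⟨1, h1⟩ (ζ ⟨1, h1⟩))) -
        Real.sqrt (margTwoDens N σ A μ ζ ζ')) ^ 2

/-- The two-block restricted Dirichlet form `I°_{Λ×Λ}(σ̂μ)`, i.e. the Dirichlet form of
`L°_Λ ⊗ 1 + 1 ⊗ L°_Λ` of the square root of the density of `(σ̂μ)|_{Λ×Λ}`. -/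
noncomputable def ItwoRest {S : Finset Γ} (σ : Γ) (A : Finset Γ) (Eset : Finset (Γ × Gen S))
    (μ : Conf N → ℝ) : ℝ :=
  (1 / 2) * ∑ e ∈ Eset, ∑ ζ : ({a // a ∈ A} → Bool), ∑ ζ' : ({a // a ∈ A} → Bool),
    (((Fintype.card ({a // a ∈ A} → Bool) : ℝ)) ^ 2)⁻¹ *
      ((Real.sqrt (margTwoDens N σ A μ (exchOn A e.1 (e.1 * (e.2 : Γ)) ζ) ζ') -
          Real.sqrt (margTwoDens N σ A μ ζ ζ')) ^ 2 +
        (Real.sqrt (margTwoDens N σ A μ ζ (exchOn A e.1 (e.1 * (e.2 : Γ)) ζ')) -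
          Real.sqrt (margTwoDens N σ A μ ζ ζ')) ^ 2)

end Quot

/-- The edge set `E_Λ` of the subgraph `Λ` spanned by the ball of radius `K`. -/
def ELam (S : Finset Γ) (K : ℕ) : Finset (Γ × Gen S) :=
  (ballF S K ×ˢ (Finset.univ : Finset (Gen S))).filter fun e => e.1 * (e.2 : Γ) ∈ ballF S K

section HelperA

noncomputable def pnorm {G : Type} [Fintype G] [DecidableEq G] (g : (G → Bool) → ℝ)
    (π : Equiv.Perm G) : ℝ :=
  ‖(WithLp.toLp 2 (fun η : G → Bool => g (η ∘ π) - g η) : EuclideanSpace ℝ (G → Bool))‖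

lemma pnorm_sq {G : Type} [Fintype G] [DecidableEq G] (g : (G → Bool) → ℝ)
    (π : Equiv.Perm G) : pnorm g π ^ 2 = ∑ η : G → Bool, (g (η ∘ π) - g η) ^ 2 := by
  rw [pnorm, EuclideanSpace.norm_sq_eq]
  simp

lemma sum_comp_perm {G : Type} [Fintype G] [DecidableEq G] (h : (G → Bool) → ℝ)
    (π : Equiv.Perm G) : ∑ η : G → Bool, h (η ∘ π) = ∑ η, h η :=
  Equiv.sum_comp (Equiv.arrowCongr π.symm (Equiv.refl Bool)) h

lemma pnorm_one {G : Type} [Fintype G] [DecidableEq G] (g : (G → Bool) → ℝ) :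
    pnorm g 1 = 0 := by
  have h := pnorm_sq g 1
  simpa using h

lemma pnorm_nonneg {G : Type} [Fintype G] [DecidableEq G] (g : (G → Bool) → ℝ)
    (π : Equiv.Perm G) : 0 ≤ pnorm g π := norm_nonneg _

lemma pnorm_mul {G : Type} [Fintype G] [DecidableEq G] (g : (G → Bool) → ℝ)
    (π ρ : Equiv.Perm G) : pnorm g (π * ρ) ≤ pnorm g π + pnorm g ρ := by
  have h1 : pnorm g ρ = ‖(WithLp.toLp 2 (fun η : G → Bool => g ((η ∘ π) ∘ ρ) - g (η ∘ π)) :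
      EuclideanSpace ℝ (G → Bool))‖ := by
    rw [← sq_eq_sq₀ (pnorm_nonneg _ _) (norm_nonneg _), pnorm_sq, EuclideanSpace.norm_sq_eq]
    simp only [Real.norm_eq_abs, sq_abs]
    exact (sum_comp_perm (fun η => (g (η ∘ ρ) - g η) ^ 2) π).symm
  rw [h1, pnorm, pnorm]
  refine le_trans (le_of_eq ?_) (norm_add_le _ _)
  congr 1
  ext η
  simp [Function.comp_assoc]

lemma pnorm_swap {G : Type} [Fintype G] [DecidableEq G] (g : (G → Bool) → ℝ)
    (x y z : G) : pnorm g (Equiv.swap x z) ≤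
      pnorm g (Equiv.swap x y) + 2 * pnorm g (Equiv.swap y z) := by
  have n1 := pnorm_nonneg g (Equiv.swap x y)
  have n2 := pnorm_nonneg g (Equiv.swap y z)
  by_cases hxz : x = z
  · subst hxz
    rw [Equiv.swap_self, ← Equiv.Perm.one_def, pnorm_one]; positivity
  by_cases hxy : x = y
  · subst hxy; linarith
  by_cases hyz : y = z
  · subst hyz; linarith
  have h3 : Equiv.swap x z = Equiv.swap y z * Equiv.swap x y * Equiv.swap y z := by
    rw [Equiv.swap_comm x z, ← Equiv.swap_mul_swap_mul_swap (x := x) (y := y) (z := z) hxy hxz]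
  rw [h3]
  have a := pnorm_mul g (Equiv.swap y z * Equiv.swap x y) (Equiv.swap y z)
  have b := pnorm_mul g (Equiv.swap y z) (Equiv.swap x y)
  linarith

/-- expectation changes little under a permutation -/
lemma exp_diff {G : Type} [Fintype G] [DecidableEq G] (g : (G → Bool) → ℝ)
    (hg : ∑ η, g η ^ 2 = 1) (h : (G → Bool) → ℝ) (hh : ∀ η, |h η| ≤ 1) (π : Equiv.Perm G) :
    |∑ η, g η ^ 2 * h (η ∘ π) - ∑ η, g η ^ 2 * h η| ≤ 2 * pnorm g π := by
  have e1 : ∑ η, g η ^ 2 * h η = ∑ η, g (η ∘ π) ^ 2 * h (η ∘ π) :=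
    (sum_comp_perm (fun η => g η ^ 2 * h η) π).symm
  have hg' : ∑ η : G → Bool, g (η ∘ π) ^ 2 = 1 := by
    rw [sum_comp_perm (fun η => g η ^ 2) π, hg]
  rw [e1, ← Finset.sum_sub_distrib]
  have e2 : ∀ η : G → Bool, g η ^ 2 * h (η ∘ π) - g (η ∘ π) ^ 2 * h (η ∘ π) =
      (g (η ∘ π) - g η) * (-(g (η ∘ π) + g η) * h (η ∘ π)) := fun η => by ring
  simp only [e2]
  apply abs_le_of_sq_le_sq _ (by have := pnorm_nonneg g π; positivity)
  refine (Finset.sum_mul_sq_le_sq_mul_sq _ _ _).trans ?_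
  rw [mul_pow, ← pnorm_sq, mul_comm]
  refine mul_le_mul_of_nonneg_right ?_ (sq_nonneg _)
  have : ∀ η : G → Bool, (-(g (η ∘ π) + g η) * h (η ∘ π)) ^ 2 ≤
      2 * g (η ∘ π) ^ 2 + 2 * g η ^ 2 := by
    intro η
    have h1 : h (η ∘ π) ^ 2 ≤ 1 := by
      rw [← sq_abs]; have := hh (η ∘ π); have := abs_nonneg (h (η ∘ π)); nlinarith
    rw [mul_pow, neg_sq]
    have : (g (η ∘ π) + g η) ^ 2 * h (η ∘ π) ^ 2 ≤ (g (η ∘ π) + g η) ^ 2 * 1 :=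
      mul_le_mul_of_nonneg_left h1 (sq_nonneg _)
    nlinarith [sq_nonneg (g (η ∘ π) - g η)]
  refine (Finset.sum_le_sum fun η _ => this η).trans ?_
  rw [Finset.sum_add_distrib, ← Finset.mul_sum, ← Finset.mul_sum, hg, hg']
  norm_num

def bv (b : Bool) : ℝ := if b then 1 else 0

lemma bv_nonneg (b : Bool) : 0 ≤ bv b := by cases b <;> simp [bv]
lemma bv_le (b : Bool) : bv b ≤ 1 := by cases b <;> simp [bv]

noncomputable def Qc {G : Type} [Fintype G] [DecidableEq G] (g : (G → Bool) → ℝ) (u v : G) : ℝ :=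
  ∑ η, g η ^ 2 * (bv (η u) * bv (η v))

lemma Qc_comm {G : Type} [Fintype G] [DecidableEq G] (g : (G → Bool) → ℝ) (u v : G) :
    Qc g u v = Qc g v u := by
  exact Finset.sum_congr rfl fun η _ => by rw [mul_comm (bv (η u))]

lemma Qc_nonneg {G : Type} [Fintype G] [DecidableEq G] (g : (G → Bool) → ℝ) (u v : G) :
    0 ≤ Qc g u v :=
  Finset.sum_nonneg fun η _ => mul_nonneg (sq_nonneg _) (mul_nonneg (bv_nonneg _) (bv_nonneg _))

lemma Qc_le {G : Type} [Fintype G] [DecidableEq G] (g : (G → Bool) → ℝ)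
    (hg : ∑ η, g η ^ 2 = 1) (u v : G) : Qc g u v ≤ 1 := by
  rw [← hg]
  refine Finset.sum_le_sum fun η _ => mul_le_of_le_one_right (sq_nonneg _) ?_
  exact mul_le_one₀ (bv_le _) (bv_nonneg _) (bv_le _)

/-- replacing first point -/
lemma Qc_move {G : Type} [Fintype G] [DecidableEq G] (g : (G → Bool) → ℝ)
    (hg : ∑ η, g η ^ 2 = 1) (u x v : G) (hu : v ≠ u) (hx : v ≠ x) :
    |Qc g x v - Qc g u v| ≤ 2 * pnorm g (Equiv.swap u x) := by
  have := exp_diff g hg (fun η => bv (η u) * bv (η v)) (fun _ => by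
    rw [abs_of_nonneg (mul_nonneg (bv_nonneg _) (bv_nonneg _))]
    exact mul_le_one₀ (bv_le _) (bv_nonneg _) (bv_le _)) (Equiv.swap u x)
  simpa [Qc, Equiv.swap_apply_of_ne_of_ne hu hx] using this

lemma Qc_close {G : Type} [Fintype G] [DecidableEq G] (g : (G → Bool) → ℝ)
    (hg : ∑ η, g η ^ 2 = 1) (A : Set G) (r : ℝ) 
    (hA : ∀ x ∈ A, ∀ y ∈ A, pnorm g (Equiv.swap x y) ≤ r)
    (u v x y : G) (hu : u ∈ A) (hv : v ∈ A) (hx : x ∈ A) (hy : y ∈ A) (huv : u ≠ v)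
    (hxy : x ≠ y) : |Qc g u v - Qc g x y| ≤ 4 * r := by
  have r0 : 0 ≤ r := (pnorm_nonneg g _).trans (hA x hx x hx)
  by_cases h : v = x
  · subst h
    have h1 := Qc_move g hg u y v huv.symm hxy
    have := hA u hu y hy
    rw [Qc_comm g v y, abs_sub_comm]
    linarith
  · have h1 := Qc_move g hg u x v huv.symm h
    have h2 := Qc_move g hg v y x (fun e => h e.symm) hxy
    rw [Qc_comm g y x, Qc_comm g v x] at h2
    have := hA u hu x hx
    have := hA v hv y hy
    rw [abs_le] at *
    constructor <;> linarith [h1.1, h1.2, h2.1, h2.2]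

lemma second_moment {G : Type} [Fintype G] [DecidableEq G] (g : (G → Bool) → ℝ)
    (hg : ∑ η, g η ^ 2 = 1) (A : Set G) (r : ℝ) (hr : 0 ≤ r)
    (hA : ∀ x ∈ A, ∀ y ∈ A, pnorm g (Equiv.swap x y) ≤ r)
    (w : G → ℝ) (θ : ℝ) (t0 : 0 ≤ θ) (hwA : ∀ v, v ∉ A → w v = 0) (hw0 : ∑ v, w v = 0)
    (hw1 : ∑ v, |w v| ≤ 2) (hwθ : ∀ v, |w v| ≤ θ) :
    ∑ η, g η ^ 2 * (∑ v, w v * bv (η v)) ^ 2 ≤ 16 * r + 2 * θ := by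
  obtain ⟨κ, k0, k1, hk⟩ : ∃ κ : ℝ, 0 ≤ κ ∧ κ ≤ 1 ∧ ∀ u ∈ A, ∀ v ∈ A, u ≠ v →
      |Qc g u v - κ| ≤ 4 * r := by
    by_cases h : ∃ x ∈ A, ∃ y ∈ A, x ≠ y
    · obtain ⟨x, hx, y, hy, hxy⟩ := h
      exact ⟨Qc g x y, Qc_nonneg _ _ _, Qc_le _ hg _ _, fun u hu v hv huv =>
        Qc_close g hg A r hA u v x y hu hv hx hy huv hxy⟩
    · push Not at h
      exact ⟨0, le_rfl, zero_le_one, fun u hu v hv huv => absurd (h u hu v hv) huv⟩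
  have e1 : ∑ η, g η ^ 2 * (∑ v, w v * bv (η v)) ^ 2 =
      ∑ u, ∑ v, w u * w v * Qc g u v := by
    have : ∀ η : G → Bool, g η ^ 2 * (∑ v, w v * bv (η v)) ^ 2 =
        ∑ u, ∑ v, w u * w v * (g η ^ 2 * (bv (η u) * bv (η v))) := by
      intro η
      rw [sq (∑ v, w v * bv (η v)), Finset.sum_mul_sum, Finset.mul_sum]
      refine Finset.sum_congr rfl fun u _ => ?_
      rw [Finset.mul_sum]
      exact Finset.sum_congr rfl fun v _ => by ring
    simp only [this, Qc, Finset.mul_sum]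
    rw [Finset.sum_comm]
    exact Finset.sum_congr rfl fun u _ => Finset.sum_comm
  have e2 : ∑ u, ∑ v, w u * w v * κ = 0 := by
    simp only [← Finset.sum_mul, ← Finset.mul_sum, hw0]; simp
  have e3 : ∑ u, ∑ v, w u * w v * Qc g u v = ∑ u, ∑ v, w u * w v * (Qc g u v - κ) := by
    simp only [mul_sub, Finset.sum_sub_distrib, e2, sub_zero]
  rw [e1, e3]
  have hb : ∀ u v, w u * w v * (Qc g u v - κ) ≤
      |w u| * |w v| * (4 * r) + (if u = v then |w u| * θ else 0) := by
    intro u v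
    refine (le_abs_self _).trans ?_
    rw [abs_mul, abs_mul]
    have p : 0 ≤ |w u| * |w v| := by positivity
    by_cases huv : u = v
    · subst huv
      simp only [if_true]
      have : |Qc g u u - κ| ≤ 1 := by
        rw [abs_le]; have := Qc_nonneg g u u; have := Qc_le g hg u u
        constructor <;> linarith
      have a := mul_le_mul_of_nonneg_left this p
      have b := mul_le_mul_of_nonneg_left (hwθ u) (abs_nonneg (w u))
      have : 0 ≤ |w u| * |w u| * (4 * r) := by positivity
      linarith
    · simp only [huv, if_false, add_zero]
      by_cases hu : u ∈ A
      · by_cases hv : v ∈ A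
        · exact mul_le_mul_of_nonneg_left (hk u hu v hv huv) p
        · simp [hwA v hv]
      · simp [hwA u hu]
  refine (Finset.sum_le_sum fun u _ => Finset.sum_le_sum fun v _ => hb u v).trans ?_
  simp only [Finset.sum_add_distrib, ← Finset.sum_mul, ← Finset.mul_sum, Finset.sum_ite_eq,
    Finset.mem_univ, if_true]
  have s0 : 0 ≤ ∑ v, |w v| := Finset.sum_nonneg fun _ _ => abs_nonneg _
  nlinarith [mul_le_mul_of_nonneg_right hw1 t0, mul_le_mul hw1 hw1 s0 zero_le_two]
end HelperA

section HelperB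

lemma ballF_mono {Γ : Type} [Group Γ] [DecidableEq Γ] (S : Finset Γ) : Monotone (ballF S) :=
  monotone_nat_of_le_succ fun n => by
    intro x hx
    exact Finset.mem_union_left _ hx

lemma exists_ballF {Γ : Type} [Group Γ] [DecidableEq Γ] (S : Finset Γ)
    (hS_symm : ∀ s ∈ S, s⁻¹ ∈ S) (hS_gen : Subgroup.closure (S : Set Γ) = ⊤) (x : Γ) :
    ∃ n, x ∈ ballF S n := by
  have hx : x ∈ Subgroup.closure (S : Set Γ) := by rw [hS_gen]; trivial
  induction hx using Subgroup.closure_induction_right with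
  | one => exact ⟨0, one_mem_ballF S 0⟩
  | mul_right y hy s hs ih =>
    obtain ⟨n, hn⟩ := ih
    exact ⟨n + 1, Finset.mem_union_right _ (Finset.mul_mem_mul hn hs)⟩
  | mul_inv_cancel y hy s hs ih =>
    obtain ⟨n, hn⟩ := ih
    exact ⟨n + 1, Finset.mem_union_right _ (Finset.mul_mem_mul hn (hS_symm s hs))⟩

lemma exists_ballF_finset {Γ : Type} [Group Γ] [DecidableEq Γ] (S : Finset Γ)
    (hS_symm : ∀ s ∈ S, s⁻¹ ∈ S) (hS_gen : Subgroup.closure (S : Set Γ) = ⊤) (T : Finset Γ) :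
    ∃ n, T ⊆ ballF S n := by
  choose f hf using exists_ballF S hS_symm hS_gen
  exact ⟨T.sup f, fun x hx => ballF_mono S (Finset.le_sup hx) (hf x)⟩

lemma wordNorm_le {Γ : Type} [Group Γ] [DecidableEq Γ] (S : Finset Γ) {x : Γ} {n : ℕ}
    (h : x ∈ ballF S n) : wordNorm S x ≤ n := Nat.sInf_le h

lemma mem_ballF_of_wordNorm {Γ : Type} [Group Γ] [DecidableEq Γ] (S : Finset Γ)
    (hS_symm : ∀ s ∈ S, s⁻¹ ∈ S) (hS_gen : Subgroup.closure (S : Set Γ) = ⊤) {x : Γ} {n : ℕ}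
    (h : wordNorm S x ≤ n) : x ∈ ballF S n :=
  ballF_mono S h (Nat.sInf_mem (s := {n | x ∈ ballF S n}) (exists_ballF S hS_symm hS_gen x))

lemma bdry_card {Γ : Type} [Group Γ] [DecidableEq Γ] (S F : Finset Γ) (n : ℕ) :
    ∀ g ∈ ballF S n, (F.image (· * g) \ F).card ≤ n * ((F * S) \ F).card := by
  induction n with
  | zero => 
    intro g hg
    simp [ballF] at hg
    simp [hg]
  | succ n ih =>
    intro g hg
    rw [ballF, Finset.mem_union] at hg
    rcases hg with hg | hg
    · exact (ih g hg).trans (Nat.mul_le_mul_right _ (Nat.le_succ n))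
    · obtain ⟨a, ha, s, hs, rfl⟩ := Finset.mem_mul.1 hg
      have hsub : F.image (· * (a * s)) \ F ⊆
          (F.image (· * a) \ F).image (· * s) ∪ ((F * S) \ F) := by
        intro x hx
        rw [Finset.mem_sdiff, Finset.mem_image] at hx
        obtain ⟨⟨f, hf, rfl⟩, hx⟩ := hx
        rw [Finset.mem_union]
        by_cases hfa : f * a ∈ F
        · right
          rw [Finset.mem_sdiff]
          exact ⟨by rw [← mul_assoc]; exact Finset.mul_mem_mul hfa hs, hx⟩
        · left
          rw [Finset.mem_image]
          exact ⟨f * a, Finset.mem_sdiff.2 ⟨Finset.mem_image_of_mem _ hf, hfa⟩, mul_assoc _ _ _⟩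
      refine (Finset.card_le_card hsub).trans ((Finset.card_union_le _ _).trans ?_)
      have := (Finset.card_image_le (s := F.image (· * a) \ F) (f := (· * s))).trans (ih a ha)
      rw [Nat.add_mul, Nat.one_mul]
      omega

lemma fiber_card {Γ : Type} [Group Γ] [DecidableEq Γ] (S F T : Finset Γ) (n : ℕ)
    (hT : T ⊆ ballF S n) (N : Subgroup Γ) [N.Normal] [DecidableEq (Γ ⧸ N)]
    (hinj : ∀ x ∈ T, ∀ y ∈ T, (x : Γ ⧸ N) = y → x = y) (v : Γ ⧸ N) :
    T.card * (F.filter fun σ : Γ => (σ : Γ ⧸ N) = v).card ≤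
      F.card + T.card * (n * ((F * S) \ F).card) := by
  set P := F.filter fun σ : Γ => (σ : Γ ⧸ N) = v with hP
  have h1 : ((T ×ˢ P).image fun p => p.2 * p.1).card = T.card * P.card := by
    rw [Finset.card_image_of_injOn, Finset.card_product]
    rintro ⟨a, p⟩ h1 ⟨b, q⟩ h2 h
    simp only [Finset.coe_product, Set.mem_prod, Finset.mem_coe, hP, Finset.mem_filter] at h1 h2 h
    have e : ((p * a : Γ) : Γ ⧸ N) = ((q * b : Γ) : Γ ⧸ N) := by rw [h]
    rw [QuotientGroup.mk_mul, QuotientGroup.mk_mul, h1.2.2, h2.2.2] at e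
    have hab := hinj a h1.1 b h2.1 (mul_left_cancel e)
    subst hab
    rw [mul_right_cancel h]
  rw [← h1]
  have hsub : ((T ×ˢ P).image fun p => p.2 * p.1) ⊆
      F ∪ T.biUnion fun g => F.image (· * g) \ F := by
    intro x hx
    obtain ⟨⟨a, p⟩, hp, rfl⟩ := Finset.mem_image.1 hx
    rw [Finset.mem_product] at hp
    have hpF : p ∈ F := (Finset.mem_filter.1 hp.2).1
    rw [Finset.mem_union]
    by_cases h : p * a ∈ F
    · exact Or.inl h
    · right
      rw [Finset.mem_biUnion]
      exact ⟨a, hp.1, Finset.mem_sdiff.2 ⟨Finset.mem_image_of_mem _ hpF, h⟩⟩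
  refine (Finset.card_le_card hsub).trans ((Finset.card_union_le _ _).trans ?_)
  refine Nat.add_le_add_left ?_ _
  exact Finset.card_biUnion_le_card_mul _ _ _ fun g hg => bdry_card S F n g (hT hg)

lemma fiber_small {Γ : Type} [Group Γ] [DecidableEq Γ] [Infinite Γ]
    (S : Finset Γ) (hS_symm : ∀ s ∈ S, s⁻¹ ∈ S)
    (hS_gen : Subgroup.closure (S : Set Γ) = ⊤)
    (Γs : ℕ → Subgroup Γ) [∀ m, (Γs m).Normal] [∀ m, DecidableEq (Γ ⧸ Γs m)]
    (hdesc : ∀ m, Γs (m + 1) ≤ Γs m)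
    (hsep : ∀ x : Γ, (∀ m, x ∈ Γs m) → x = 1)
    (F : ℕ → Finset Γ) (hF : IsFolner S F) (θ : ℝ) (hθ : 0 < θ) :
    ∃ i0 m1 : ℕ, ∀ i ≥ i0, ∀ m ≥ m1, ∀ v : Γ ⧸ Γs m,
      (((F i).filter fun σ : Γ => (σ : Γ ⧸ Γs m) = v).card : ℝ) ≤ θ * (F i).card := by
  obtain ⟨M, hM⟩ := exists_nat_gt (2 / θ)
  have hM0 : (0 : ℝ) < M := lt_trans (by positivity) hM
  obtain ⟨T, hT⟩ := Infinite.exists_subset_card_eq Γ M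
  obtain ⟨n, hn⟩ := exists_ballF_finset S hS_symm hS_gen T
  have hanti : Antitone Γs := antitone_nat_of_succ_le hdesc
  have hev : ∀ᶠ m in atTop, ∀ x ∈ T, ∀ y ∈ T, (x : Γ ⧸ Γs m) = y → x = y := by
    rw [Filter.eventually_all_finset]
    intro x _
    rw [Filter.eventually_all_finset]
    intro y _
    by_cases hxy : x = y
    · exact Filter.Eventually.of_forall fun _ _ => hxy
    · have : ∃ m, x⁻¹ * y ∉ Γs m := by
        by_contra! h
        exact hxy (inv_mul_eq_one.1 (hsep _ h))
      obtain ⟨m, hm⟩ := this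
      filter_upwards [eventually_ge_atTop m] with k hk h
      exact absurd (hanti hk (QuotientGroup.eq.1 h)) hm
  obtain ⟨m1, hm1⟩ := eventually_atTop.1 hev
  have hlt : ∀ᶠ i in atTop, (((F i * S) \ F i).card : ℝ) / (F i).card < 1 / (M * n + 1) :=
    hF.2.eventually (gt_mem_nhds (by positivity))
  obtain ⟨i0, hi0⟩ := eventually_atTop.1 hlt
  refine ⟨i0, m1, fun i hi m hm v => ?_⟩
  have hc : (0 : ℝ) < (F i).card := by exact_mod_cast (hF.1 i).card_pos
  have h1 := hi0 i hi
  rw [div_lt_div_iff₀ hc (by positivity)] at h1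
  have h2 := fiber_card S (F i) T n hn (Γs m) (hm1 m hm) v
  rw [hT] at h2
  have h2' : (M : ℝ) * ((F i).filter fun σ : Γ => (σ : Γ ⧸ Γs m) = v).card ≤
      (F i).card + M * (n * ((F i * S) \ F i).card) := by exact_mod_cast h2
  rw [div_lt_iff₀ hθ] at hM
  have h3 : (0 : ℝ) ≤ ((F i * S) \ F i).card := Nat.cast_nonneg _
  have h4 : (M : ℝ) * ((F i).filter fun σ : Γ => (σ : Γ ⧸ Γs m) = v).card ≤ M * (θ * (F i).card) := by
    nlinarith [mul_le_mul_of_nonneg_right hM.le hc.le]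
  exact le_of_mul_le_mul_left h4 hM0

lemma bFol_spec {Γ : Type} [Group Γ] [DecidableEq Γ]
    (S : Finset Γ) (hS_symm : ∀ s ∈ S, s⁻¹ ∈ S)
    (hS_gen : Subgroup.closure (S : Set Γ) = ⊤)
    (F : ℕ → Finset Γ) (hcard : ∀ n : ℕ, ∃ i0, ∀ i ≥ i0, n < (F i).card) (i0 : ℕ) :
    ∃ K0 : ℝ, ∀ K ≥ K0, i0 ≤ bFol S F K ∧ F (bFol S F K) ⊆ ballF S ⌊K⌋₊ := by
  obtain ⟨n, hn⟩ := exists_ballF_finset S hS_symm hS_gen (F i0)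
  refine ⟨n, fun K hK => ?_⟩
  have key : ∀ i, (∀ x ∈ F i, (wordNorm S x : ℝ) ≤ K) → F i ⊆ ballF S ⌊K⌋₊ := by
    intro i hi x hx
    exact mem_ballF_of_wordNorm S hS_symm hS_gen (Nat.le_floor (hi x hx))
  have hmem : i0 ∈ {i | ∀ x ∈ F i, (wordNorm S x : ℝ) ≤ K} := by
    intro x hx
    exact le_trans (by exact_mod_cast wordNorm_le S (hn hx)) hK
  have hbdd : BddAbove {i | ∀ x ∈ F i, (wordNorm S x : ℝ) ≤ K} := by
    obtain ⟨j, hj⟩ := hcard (ballF S ⌊K⌋₊).card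
    refine ⟨j, fun i hi => ?_⟩
    by_contra! hlt
    exact absurd (Finset.card_le_card (key i hi)) (not_le.2 (hj i hlt.le))
  exact ⟨le_csSup hbdd hmem, key _ (Nat.sSup_mem ⟨i0, hmem⟩ hbdd)⟩
end HelperB

section HelperC

lemma exch_eq_swap {α : Type} [DecidableEq α] (x y : α) (η : α → Bool) :
    exch x y η = η ∘ Equiv.swap x y := by
  funext z
  simp only [exch, Function.comp, Equiv.swap_apply_def]
  split_ifs <;> rfl

lemma pnorm_inv {G : Type} [Group G] [Fintype G] [DecidableEq G] (g : (G → Bool) → ℝ)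
    (hinv : ∀ (σ : G) (η : G → Bool), g (fun z => η (σ⁻¹ * z)) = g η) (a x y : G) :
    pnorm g (Equiv.swap (a * x) (a * y)) = pnorm g (Equiv.swap x y) := by
  rw [← sq_eq_sq₀ (pnorm_nonneg _ _) (pnorm_nonneg _ _), pnorm_sq, pnorm_sq,
    ← sum_comp_perm _ (Equiv.mulLeft a⁻¹)]
  refine Finset.sum_congr rfl fun η _ => ?_
  have e1 : g (η ∘ (Equiv.mulLeft a⁻¹)) = g η := hinv a η
  have e2 : g ((η ∘ (Equiv.mulLeft a⁻¹)) ∘ Equiv.swap (a * x) (a * y)) =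
      g (η ∘ Equiv.swap x y) := by
    rw [← hinv a (η ∘ Equiv.swap x y)]
    congr 1
    funext z
    simp only [Function.comp, Equiv.coe_mulLeft]
    congr 1
    simp only [Equiv.swap_apply_def]
    by_cases h1 : z = a * x
    · simp [h1]
    · have h1' : a⁻¹ * z ≠ x := fun h => h1 (by rw [← h]; simp)
      by_cases h2 : z = a * y
      · simp only [h2, inv_mul_cancel_left]
        by_cases h3 : y = x
        · simp [h3]
        · simp [h3]
      · have h2' : a⁻¹ * z ≠ y := fun h => h2 (by rw [← h]; simp)
        simp [h1, h2, h1', h2']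
  rw [e1, e2]

lemma edge_bound {Γ : Type} [Group Γ] [DecidableEq Γ] (S : Finset Γ) (N : Subgroup Γ) [N.Normal]
    [Fintype (Γ ⧸ N)] [DecidableEq (Γ ⧸ N)] (c : JumpRate S) (μ : Conf N → ℝ)
    (hp : IsProb N μ) (hi : IsInvariant N μ) (B : ℝ)
    (hI : ImSum N c μ ≤ B * (N.index : ℝ)) (s : Γ) (hs : s ∈ S) :
    pnorm (fun η => Real.sqrt (μ η)) (Equiv.swap 1 (s : Γ ⧸ N)) ≤ Real.sqrt (2 * B / c.c₀) := by
  set g : Conf N → ℝ := fun η => Real.sqrt (μ η) with hg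
  have hinv : ∀ (σ : Γ ⧸ N) (η : Γ ⧸ N → Bool), g (fun z => η (σ⁻¹ * z)) = g η := by
    intro σ η
    simp only [hg]
    exact congrArg Real.sqrt (hi σ η)
  have hcpos : (0 : ℝ) < Fintype.card (Conf N) := by exact_mod_cast Fintype.card_pos
  have hterm : ∀ (v : Γ ⧸ N) (s : Gen S), c.c₀ * pnorm g (Equiv.swap 1 ((s : Γ) : Γ ⧸ N)) ^ 2 ≤
      ∑ η, nuU N η * (cQ N c v s η *
        (sqrtDens N μ (exchQ N v (s : Γ) η) - sqrtDens N μ η) ^ 2) := by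
    intro v s
    rw [← pnorm_inv g hinv v, mul_one, pnorm_sq, Finset.mul_sum]
    refine Finset.sum_le_sum fun η _ => ?_
    have e : ∀ ξ, sqrtDens N μ ξ = Real.sqrt (Fintype.card (Conf N)) * g ξ := by
      intro ξ
      rw [sqrtDens, dens, Real.sqrt_mul hcpos.le]
    rw [e, e, ← mul_sub, mul_pow, Real.sq_sqrt hcpos.le, exchQ, exch_eq_swap, nuU]
    have hc := c.nondeg (Quotient.out v) s (liftZ N η)
    have : (Fintype.card (Conf N) : ℝ)⁻¹ * (cQ N c v s η * ((Fintype.card (Conf N) : ℝ) *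
        (g (η ∘ Equiv.swap v (v * ((s : Γ) : Γ ⧸ N))) - g η) ^ 2)) =
        cQ N c v s η * (g (η ∘ Equiv.swap v (v * ((s : Γ) : Γ ⧸ N))) - g η) ^ 2 := by
      field_simp
    rw [this]
    exact mul_le_mul_of_nonneg_right hc (sq_nonneg _)
  have hsum : (1 / 2) * ((N.index : ℝ) * (c.c₀ * pnorm g (Equiv.swap 1 (s : Γ ⧸ N)) ^ 2)) ≤
      ImSum N c μ := by
    rw [ImSum, Fintype.sum_prod_type]
    refine mul_le_mul_of_nonneg_left ?_ (by norm_num)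
    have : (N.index : ℝ) = (Finset.univ : Finset (Γ ⧸ N)).card := by
      rw [Subgroup.index, Nat.card_eq_fintype_card, Finset.card_univ]
    rw [this, ← nsmul_eq_mul, ← Finset.sum_const]
    refine Finset.sum_le_sum fun v _ => ?_
    refine (hterm v ⟨s, hs⟩).trans ?_
    refine Finset.single_le_sum (f := fun s : Gen S => ∑ η, nuU N η * (cQ N c v s η *
        (sqrtDens N μ (exchQ N v (s : Γ) η) - sqrtDens N μ η) ^ 2)) (fun s' _ => ?_)
        (Finset.mem_univ _)
    exact le_trans (mul_nonneg c.c₀_pos.le (sq_nonneg _)) (hterm v s')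
  have hidx : (0 : ℝ) < N.index := by
    rw [Subgroup.index, Nat.card_eq_fintype_card]; exact_mod_cast Fintype.card_pos
  apply Real.le_sqrt_of_sq_le
  rw [le_div_iff₀ c.c₀_pos]
  have h := hsum.trans hI
  have : (N.index : ℝ) * (pnorm g (Equiv.swap 1 (s : Γ ⧸ N)) ^ 2 * c.c₀) ≤ N.index * (2 * B) := by
    linarith
  exact le_of_mul_le_mul_left this hidx

lemma ball_bound {Γ : Type} [Group Γ] [DecidableEq Γ] (S : Finset Γ) (N : Subgroup Γ) [N.Normal]
    [Fintype (Γ ⧸ N)] [DecidableEq (Γ ⧸ N)] (g : Conf N → ℝ)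
    (hinv : ∀ (σ : Γ ⧸ N) (η : Γ ⧸ N → Bool), g (fun z => η (σ⁻¹ * z)) = g η) (d : ℝ) (hd : 0 ≤ d)
    (hs : ∀ s ∈ S, pnorm g (Equiv.swap 1 (s : Γ ⧸ N)) ≤ d) (n : ℕ) :
    ∀ a ∈ ballF S n, pnorm g (Equiv.swap 1 (a : Γ ⧸ N)) ≤ 2 * n * d := by
  induction n with
  | zero =>
    intro a ha
    simp only [ballF, Finset.mem_singleton] at ha
    subst ha
    rw [QuotientGroup.mk_one, Equiv.swap_self, ← Equiv.Perm.one_def, pnorm_one]; simp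
  | succ n ih =>
    intro a ha
    push_cast
    rw [ballF, Finset.mem_union] at ha
    rcases ha with ha | ha
    · have := ih a ha
      nlinarith
    · obtain ⟨b, hb, s, hss, rfl⟩ := Finset.mem_mul.1 ha
      have h1 := pnorm_swap g 1 (b : Γ ⧸ N) ((b * s : Γ) : Γ ⧸ N)
      have h2 := pnorm_inv g hinv (b : Γ ⧸ N) 1 (s : Γ ⧸ N)
      rw [mul_one, ← QuotientGroup.mk_mul] at h2
      have := ih b hb
      have := hs s hss
      rw [h2] at h1
      linarith

noncomputable def pw {Γ : Type} [Group Γ] (N : Subgroup Γ) [DecidableEq (Γ ⧸ N)] (F : Finset Γ)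
    (v : Γ ⧸ N) : ℝ := ((F.filter fun σ : Γ => (σ : Γ ⧸ N) = v).card : ℝ) / F.card

lemma sum_pw {Γ : Type} [Group Γ] (N : Subgroup Γ) [Fintype (Γ ⧸ N)] [DecidableEq (Γ ⧸ N)]
    (F : Finset Γ) (h : Γ ⧸ N → ℝ) :
    ∑ v, pw N F v * h v = (F.card : ℝ)⁻¹ * ∑ σ ∈ F, h (σ : Γ ⧸ N) := by
  rw [← Finset.sum_fiberwise F (fun σ : Γ => (σ : Γ ⧸ N)), Finset.mul_sum]
  refine Finset.sum_congr rfl fun v _ => ?_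
  rw [Finset.sum_congr rfl (g := fun _ => h v) (fun σ hσ => by rw [(Finset.mem_filter.1 hσ).2]),
    Finset.sum_const, pw, nsmul_eq_mul]
  ring

lemma etabar_eq {Γ : Type} [Group Γ] [DecidableEq Γ] (N : Subgroup Γ) [N.Normal]
    [Fintype (Γ ⧸ N)] [DecidableEq (Γ ⧸ N)] (F : Finset Γ) (η : Conf N) :
    etabarQ N F 1 η = ∑ v, pw N F v * bv (η v) := by
  rw [sum_pw N F (fun v => bv (η v)), etabarQ]
  simp [bv]

lemma main_bound {Γ : Type} [Group Γ] [DecidableEq Γ] (S : Finset Γ) (N : Subgroup Γ) [N.Normal]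
    [Fintype (Γ ⧸ N)] [DecidableEq (Γ ⧸ N)] (μ : Conf N → ℝ)
    (hp : IsProb N μ) (hi : IsInvariant N μ) (d : ℝ) (hd : 0 ≤ d)
    (hs : ∀ s ∈ S, pnorm (fun η => Real.sqrt (μ η)) (Equiv.swap 1 (s : Γ ⧸ N)) ≤ d) (n : ℕ)
    (F1 F2 : Finset Γ) (h1 : F1.Nonempty) (h2 : F2.Nonempty)
    (hb1 : F1 ⊆ ballF S n) (hb2 : F2 ⊆ ballF S n)
    (θ : ℝ) (hθ : 0 ≤ θ)
    (hf1 : ∀ v : Γ ⧸ N, ((F1.filter fun σ : Γ => (σ : Γ ⧸ N) = v).card : ℝ) ≤ θ * F1.card)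
    (hf2 : ∀ v : Γ ⧸ N, ((F2.filter fun σ : Γ => (σ : Γ ⧸ N) = v).card : ℝ) ≤ θ * F2.card) :
    Emeas N μ (fun η => |etabarQ N F1 1 η - etabarQ N F2 1 η|) ≤
      Real.sqrt (96 * (n * d) + 2 * θ) := by
  set g : Conf N → ℝ := fun η => Real.sqrt (μ η) with hg
  have hg2 : ∀ η, g η ^ 2 = μ η := fun η => Real.sq_sqrt (hp.1 η)
  have hg1 : ∑ η, g η ^ 2 = 1 := by simp only [hg2]; exact hp.2
  have hinv : ∀ (σ : Γ ⧸ N) (η : Γ ⧸ N → Bool), g (fun z => η (σ⁻¹ * z)) = g η := by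
    intro σ η
    exact congrArg Real.sqrt (hi σ η)
  have hball := ball_bound S N g hinv d hd hs n
  set w : Γ ⧸ N → ℝ := fun v => pw N F1 v - pw N F2 v with hw
  have hone : ∀ F : Finset Γ, F.Nonempty → ∑ v, pw N F v = 1 := by
    intro F hF
    have := sum_pw N F (fun _ => 1)
    have hc : (F.card : ℝ) ≠ 0 := by exact_mod_cast hF.card_pos.ne'
    simpa [hc] using this
  have hnn : ∀ (F : Finset Γ) v, 0 ≤ pw N F v := fun F v => by unfold pw; positivity
  have hle : ∀ F : Finset Γ, F.Nonempty →
      (∀ v : Γ ⧸ N, ((F.filter fun σ : Γ => (σ : Γ ⧸ N) = v).card : ℝ) ≤ θ * F.card) →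
      ∀ v, pw N F v ≤ θ := by
    intro F hF h v
    have hc : (0 : ℝ) < F.card := by exact_mod_cast hF.card_pos
    rw [pw, div_le_iff₀ hc]; exact h v
  have key := second_moment g hg1 ((fun a : Γ => (a : Γ ⧸ N)) '' (ballF S n : Set Γ))
    (6 * (n * d)) (by positivity) (by
      rintro _ ⟨a, ha, rfl⟩ _ ⟨b, hb, rfl⟩
      have := pnorm_swap g (a : Γ ⧸ N) 1 (b : Γ ⧸ N)
      rw [Equiv.swap_comm (a : Γ ⧸ N) 1] at this
      have := hball a ha
      have := hball b hb
      dsimp only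
      linarith) w θ hθ (by
      intro v hv
      have : ∀ F : Finset Γ, F ⊆ ballF S n → pw N F v = 0 := by
        intro F hF
        rw [pw, Finset.filter_false_of_mem]
        · simp
        · intro σ hσ e
          exact hv ⟨σ, hF hσ, e⟩
      rw [hw]; simp only [this F1 hb1, this F2 hb2, sub_zero]) (by
      rw [hw, Finset.sum_sub_distrib, hone F1 h1, hone F2 h2, sub_self]) (by
      calc ∑ v, |w v| ≤ ∑ v, (pw N F1 v + pw N F2 v) := by
            refine Finset.sum_le_sum fun v _ => ?_
            have := hnn F1 v; have := hnn F2 v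
            rw [abs_le]; constructor <;> simp only [hw] <;> linarith
        _ = 2 := by rw [Finset.sum_add_distrib, hone F1 h1, hone F2 h2]; norm_num) (by
      intro v
      have := hnn F1 v; have := hnn F2 v
      have := hle F1 h1 hf1 v; have := hle F2 h2 hf2 v
      rw [abs_le]; constructor <;> simp only [hw] <;> linarith)
  have e : ∀ η : Conf N, etabarQ N F1 1 η - etabarQ N F2 1 η = ∑ v, w v * bv (η v) := by
    intro η
    rw [etabar_eq, etabar_eq, ← Finset.sum_sub_distrib]
    exact Finset.sum_congr rfl fun v _ => by rw [hw]; ring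
  apply Real.le_sqrt_of_sq_le
  rw [Emeas]
  have cs := Finset.sum_mul_sq_le_sq_mul_sq Finset.univ g
    (fun η => g η * |etabarQ N F1 1 η - etabarQ N F2 1 η|)
  rw [hg1, one_mul] at cs
  have e3 : ∑ η, μ η * |etabarQ N F1 1 η - etabarQ N F2 1 η| =
      ∑ η, g η * (g η * |etabarQ N F1 1 η - etabarQ N F2 1 η|) :=
    Finset.sum_congr rfl fun η _ => by rw [← hg2]; ring
  rw [e3]
  refine cs.trans ?_
  simp only [mul_pow, sq_abs, e]
  refine key.trans (le_of_eq (by ring))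

lemma etabar_mem {Γ : Type} [Group Γ] [DecidableEq Γ] (N : Subgroup Γ) [N.Normal]
    [Fintype (Γ ⧸ N)] [DecidableEq (Γ ⧸ N)] (F : Finset Γ) (η : Conf N) :
    0 ≤ etabarQ N F 1 η ∧ etabarQ N F 1 η ≤ 1 := by
  unfold etabarQ
  have h0 : 0 ≤ ∑ σ ∈ F, (if η (QuotientGroup.mk σ * 1) then (1 : ℝ) else 0) :=
    Finset.sum_nonneg fun σ _ => by split_ifs <;> norm_num
  refine ⟨by positivity, ?_⟩
  have : ∑ σ ∈ F, (if η (QuotientGroup.mk σ * 1) then (1 : ℝ) else 0) ≤ ∑ σ ∈ F, (1 : ℝ) :=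
    Finset.sum_le_sum fun σ _ => by split_ifs <;> norm_num
  rw [Finset.sum_const, nsmul_eq_mul, mul_one] at this
  rcases Nat.eq_zero_or_pos F.card with h | h
  · simp [h]
  · have h' : (0 : ℝ) < F.card := by exact_mod_cast h
    rw [inv_mul_le_iff₀ h']; linarith

lemma E_mem {Γ : Type} [Group Γ] [DecidableEq Γ] (N : Subgroup Γ) [N.Normal]
    [Fintype (Γ ⧸ N)] [DecidableEq (Γ ⧸ N)] (μ : Conf N → ℝ) (hp : IsProb N μ) (F1 F2 : Finset Γ) :
    0 ≤ Emeas N μ (fun η => |etabarQ N F1 1 η - etabarQ N F2 1 η|) ∧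
    Emeas N μ (fun η => |etabarQ N F1 1 η - etabarQ N F2 1 η|) ≤ 1 := by
  constructor
  · exact Finset.sum_nonneg fun η _ => mul_nonneg (hp.1 η) (abs_nonneg _)
  · rw [← hp.2]
    refine Finset.sum_le_sum fun η _ => mul_le_of_le_one_right (hp.1 η) ?_
    have := etabar_mem N F1 η
    have := etabar_mem N F2 η
    rw [abs_le]; constructor <;> linarith
end HelperC

lemma limsup_mem01 {α : Type} (l : Filter α) [l.NeBot] (f : α → ℝ) (B : ℝ)
    (h0 : ∀ a, 0 ≤ f a) (h1 : ∀ a, f a ≤ 1) (hB : ∀ᶠ a in l, f a ≤ B) :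
    0 ≤ limsup f l ∧ limsup f l ≤ B := by
  have hcb : IsCoboundedUnder (· ≤ ·) l f := 
    IsBoundedUnder.isCoboundedUnder_le ⟨0, by simpa using Eventually.of_forall h0⟩
  have hb : IsBoundedUnder (· ≤ ·) l f := ⟨1, by simpa using Eventually.of_forall h1⟩
  exact ⟨le_limsup_of_frequently_le (Eventually.of_forall h0).frequently hb,
    limsup_le_of_le hcb hB⟩


/-- **Replacement of the small-scale density by the mesoscopic density** (final step in the
proof of Theorem 3.1): for every jump rate `c` and every `C > 0`,
`lim_{i→∞} limsup_{ε→0} limsup_{m→∞} sup_{μ ∈ P_{m,C}}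
  E_μ |η̄_{o,i} - η̄_{o,b(ε√t_m)}| = 0`. -/
theorem density_replacement
    {Γ : Type} [Group Γ] [DecidableEq Γ] [Infinite Γ]
    (S : Finset Γ) (hS_symm : ∀ s ∈ S, s⁻¹ ∈ S)
    (hS_gen : Subgroup.closure (S : Set Γ) = ⊤)
    (Γs : ℕ → Subgroup Γ) [∀ m, (Γs m).Normal] [∀ m, (Γs m).FiniteIndex]
    [∀ m, Fintype (Γ ⧸ Γs m)] [∀ m, DecidableEq (Γ ⧸ Γs m)]
    (hdesc : ∀ m, Γs (m + 1) ≤ Γs m)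
    (hsep : ∀ x : Γ, (∀ m, x ∈ Γs m) → x = 1)
    (t : ℕ → ℝ) (ht_pos : ∀ m, 0 < t m) (ht_mono : StrictMono t)
    (ht_top : Tendsto t atTop atTop)
    (ht_diam : ∀ m, Real.sqrt (t m) ≤ 2 * (diamQ (Γs m) S : ℝ))
    (F : ℕ → Finset Γ) (hF : IsFolner S F)
    (c : JumpRate S) (C : ℝ) (hC : 0 < C) :
    Tendsto (fun i : ℕ =>
        limsup (fun ε : ℝ =>
            limsup (fun m : ℕ =>
                sSup {x : ℝ | ∃ μ : Conf (Γs m) → ℝ,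
                  IsProb (Γs m) μ ∧ IsInvariant (Γs m) μ ∧
                    ImSum (Γs m) c μ ≤ C * ((Γs m).index : ℝ) / t m ∧
                    x = Emeas (Γs m) μ (fun η =>
                      |etabarQ (Γs m) (F i) 1 η -
                        etabarQ (Γs m) (F (bFol S F (ε * Real.sqrt (t m)))) 1 η|)})
              atTop)
          (nhdsWithin 0 (Set.Ioi 0)))
      atTop (nhds 0) := by
  have hU : ∀ (i : ℕ) (ε : ℝ) (m : ℕ) (B : ℝ), 0 ≤ B → ∀ X : Set ℝ, X =
      {x : ℝ | ∃ μ : Conf (Γs m) → ℝ,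
                  IsProb (Γs m) μ ∧ IsInvariant (Γs m) μ ∧
                    ImSum (Γs m) c μ ≤ C * ((Γs m).index : ℝ) / t m ∧
                    x = Emeas (Γs m) μ (fun η =>
                      |etabarQ (Γs m) (F i) 1 η -
                        etabarQ (Γs m) (F (bFol S F (ε * Real.sqrt (t m)))) 1 η|)} →
      0 ≤ sSup X ∧ sSup X ≤ 1 := by
    rintro i ε m B hB X rfl
    constructor
    · apply Real.sSup_nonneg
      rintro x ⟨μ, hp, _, _, rfl⟩
      exact (E_mem _ μ hp _ _).1
    · apply Real.sSup_le _ zero_le_one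
      rintro x ⟨μ, hp, _, _, rfl⟩
      exact (E_mem _ μ hp _ _).2
  have hcard : ∀ n : ℕ, ∃ i0, ∀ i ≥ i0, n < (F i).card := by
    intro n
    obtain ⟨i0, m1, h⟩ := fiber_small S hS_symm hS_gen Γs hdesc hsep F hF (1 / (n + 1))
      (by positivity)
    refine ⟨i0, fun i hi => ?_⟩
    obtain ⟨σ, hσ⟩ := hF.1 i
    have h1 := h i hi m1 le_rfl (σ : Γ ⧸ Γs m1)
    have h2 : 0 < ((F i).filter fun τ : Γ => (τ : Γ ⧸ Γs m1) = σ).card :=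
      Finset.card_pos.2 ⟨σ, Finset.mem_filter.2 ⟨hσ, rfl⟩⟩
    have h3 : (1 : ℝ) ≤ ((F i).filter fun τ : Γ => (τ : Γ ⧸ Γs m1) = σ).card := by
      exact_mod_cast h2
    have h4 := h3.trans h1
    rw [one_div_mul_eq_div, le_div_iff₀ (by positivity), one_mul] at h4
    have : n + 1 ≤ (F i).card := by exact_mod_cast h4
    omega
  rw [Metric.tendsto_atTop]
  intro δ₀ hδ₀
  obtain ⟨δ, hδ, hδδ⟩ : ∃ δ : ℝ, 0 < δ ∧ δ < δ₀ := ⟨δ₀ / 2, by positivity, by linarith⟩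
  obtain ⟨i0, m1, hfib⟩ := fiber_small S hS_symm hS_gen Γs hdesc hsep F hF (δ ^ 2 / 4)
      (by positivity)
  obtain ⟨K0, hK0⟩ := bFol_spec S hS_symm hS_gen F hcard i0
  refine ⟨i0, fun i hi => ?_⟩
  obtain ⟨R, hR⟩ := exists_ballF_finset S hS_symm hS_gen (F i)
  set D : ℝ := Real.sqrt (2 * C / c.c₀) with hD
  have hD0 : 0 ≤ D := Real.sqrt_nonneg _
  have hst : Tendsto (fun m => Real.sqrt (t m)) atTop atTop :=
    Real.tendsto_sqrt_atTop.comp ht_top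
  have key : ∀ ε : ℝ, 0 < ε → ε < δ ^ 2 / (400 * (D + 1)) → ∀ᶠ m in atTop,
      sSup {x : ℝ | ∃ μ : Conf (Γs m) → ℝ,
                  IsProb (Γs m) μ ∧ IsInvariant (Γs m) μ ∧
                    ImSum (Γs m) c μ ≤ C * ((Γs m).index : ℝ) / t m ∧
                    x = Emeas (Γs m) μ (fun η =>
                      |etabarQ (Γs m) (F i) 1 η -
                        etabarQ (Γs m) (F (bFol S F (ε * Real.sqrt (t m)))) 1 η|)} ≤ δ := by
    intro ε hε hεs
    filter_upwards [eventually_ge_atTop m1, hst.eventually_ge_atTop (400 * R * D / δ ^ 2),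
      (hst.const_mul_atTop hε).eventually_ge_atTop K0] with m hm hm2 hm3
    apply Real.sSup_le _ hδ.le
    rintro x ⟨μ, hp, hinv, hI, rfl⟩
    obtain ⟨hb1, hb2⟩ := hK0 _ hm3
    have htp : 0 < Real.sqrt (t m) := Real.sqrt_pos.2 (ht_pos m)
    have hedge := edge_bound S (Γs m) c μ hp hinv (C / t m) (hI.trans (le_of_eq (by ring)))
    have hd : Real.sqrt (2 * (C / t m) / c.c₀) = D / Real.sqrt (t m) := by
      rw [hD, ← Real.sqrt_div' _ (ht_pos m).le]
      congr 1
      ring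
    rw [hd] at hedge
    refine (main_bound S (Γs m) μ hp hinv (D / Real.sqrt (t m)) (by positivity) hedge
      (R + ⌊ε * Real.sqrt (t m)⌋₊) (F i) _ (hF.1 i) (hF.1 _)
      (hR.trans (ballF_mono S (Nat.le_add_right _ _)))
      (hb2.trans (ballF_mono S (Nat.le_add_left _ _))) (δ ^ 2 / 4) (by positivity)
      (hfib i hi m hm) (hfib _ hb1 m hm)).trans ?_
    rw [Real.sqrt_le_left hδ.le]
    have hfl : (⌊ε * Real.sqrt (t m)⌋₊ : ℝ) ≤ ε * Real.sqrt (t m) :=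
      Nat.floor_le (by positivity)
    have e1 : ((R + ⌊ε * Real.sqrt (t m)⌋₊ : ℕ) : ℝ) * (D / Real.sqrt (t m)) ≤
        R * D / Real.sqrt (t m) + ε * D := by
      push_cast
      calc _ ≤ ((R : ℝ) + ε * Real.sqrt (t m)) * (D / Real.sqrt (t m)) :=
            mul_le_mul_of_nonneg_right (by linarith) (by positivity)
        _ = _ := by field_simp
    have e2 : R * D / Real.sqrt (t m) ≤ δ ^ 2 / 400 := by
      rw [div_le_iff₀ (by positivity)] at hm2
      rw [div_le_div_iff₀ htp (by norm_num)]
      linarith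
    have e3 : ε * D ≤ δ ^ 2 / 400 := by
      rw [lt_div_iff₀ (by positivity)] at hεs
      nlinarith
    have : 0 < δ ^ 2 := by positivity
    linarith
  have main := limsup_mem01 (nhdsWithin (0 : ℝ) (Set.Ioi 0)) (fun ε : ℝ =>
            limsup (fun m : ℕ =>
                sSup {x : ℝ | ∃ μ : Conf (Γs m) → ℝ,
                  IsProb (Γs m) μ ∧ IsInvariant (Γs m) μ ∧
                    ImSum (Γs m) c μ ≤ C * ((Γs m).index : ℝ) / t m ∧
                    x = Emeas (Γs m) μ (fun η =>
                      |etabarQ (Γs m) (F i) 1 η -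
                        etabarQ (Γs m) (F (bFol S F (ε * Real.sqrt (t m)))) 1 η|)})
              atTop) δ
      (fun ε => (limsup_mem01 atTop _ 1 (fun m => (hU i ε m 1 zero_le_one _ rfl).1)
        (fun m => (hU i ε m 1 zero_le_one _ rfl).2)
        (Eventually.of_forall fun m => (hU i ε m 1 zero_le_one _ rfl).2)).1)
      (fun ε => (limsup_mem01 atTop _ 1 (fun m => (hU i ε m 1 zero_le_one _ rfl).1)
        (fun m => (hU i ε m 1 zero_le_one _ rfl).2)
        (Eventually.of_forall fun m => (hU i ε m 1 zero_le_one _ rfl).2)).2)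
      (by
        filter_upwards [Ioo_mem_nhdsGT (show (0 : ℝ) < δ ^ 2 / (400 * (D + 1)) by positivity)]
          with ε hε
        exact (limsup_mem01 atTop _ δ (fun m => (hU i ε m 1 zero_le_one _ rfl).1)
          (fun m => (hU i ε m 1 zero_le_one _ rfl).2) (key ε hε.1 hε.2)).2)
  rw [Real.dist_eq, sub_zero, abs_of_nonneg main.1]
  exact lt_of_le_of_lt main.2 hδδ

end Tower
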